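/- For Re(s) > 0 and θ ∈ (0, 1], ∫₀¹ ρ(θ/x) x^{s−1} dx = θ/(s−1) − (θ^s/s) ζ(s) + θ^s/s if s ≠ 1 (interpreting the right-hand side by analytic continuation of ζ), i.e., s ∫₀¹ ρ(θ/x) x^{s−1} dx = sθ/(s−1) − θ^s ζ(s) + θ^s − 1 + 1 adjusted so that ∫₀¹ (ρ(θ/x) − θ/x) x^{s−1} dx extends analytically; concretely, for Re(s) > 1: ∫₀¹ ρ(θ/x) x^{s−1} dx = θ/(s−1) − (θ^s/s)(ζ(s) − 1) − (1 − θ^s)/s · 0 + correction — state precisely as: ∫₀¹ ρ(θ/x) x^{s−1} dx = θ/(s−1) + (θ^s/s)(1 − ζ(s)) + (1 − θ^s)·0, i.e., the single-term case of the Beurling identity: ∫₀¹ (ρ(θ/x)·1 + (1 − θ·(1/θ)·0)) — formally: for a single pair (a, θ) = (1, θ), ∫₀¹ ρ(θ/x) x^{s−1} dx = θ/(s−1) − (ζ(s) θ^s)/s, valid for 0 < Re(s) < 1 by analytic continuation, and for Re(s) > 1 with ζ the usual series. -/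

import Mathlib

open MeasureTheory

open Set Filter Asymptotics

/-- The fractional part, as a complex-valued function, cut off to `(1, ∞)`. -/
noncomputable def fractIoiOne : ℝ → ℂ :=
  (Ioi (1 : ℝ)).indicator fun t ↦ ((Int.fract t : ℝ) : ℂ)

lemma norm_fractIoiOne_le_one (t : ℝ) : ‖fractIoiOne t‖ ≤ 1 := by
  refine (norm_indicator_le_norm_self _ _).trans ?_
  rw [Complex.norm_real, Real.norm_of_nonneg (Int.fract_nonneg t)]
  exact (Int.fract_lt_one t).le

lemma measurable_fractIoiOne : Measurable fractIoiOne :=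
  (Complex.measurable_ofReal.comp measurable_fract).indicator measurableSet_Ioi

lemma locallyIntegrableOn_fractIoiOne : LocallyIntegrableOn fractIoiOne (Ioi 0) := by
  refine LocallyIntegrable.locallyIntegrableOn ?_ _
  refine (locallyIntegrable_const (1 : ℝ)).mono measurable_fractIoiOne.aestronglyMeasurable ?_
  exact ae_of_all _ fun t ↦ by simpa using norm_fractIoiOne_le_one t

lemma fractIoiOne_isBigO_atTop : fractIoiOne =O[atTop] (fun t : ℝ ↦ t ^ (-(0 : ℝ))) :=
  IsBigO.of_bound 1 <| Eventually.of_forall fun t ↦ by simpa using norm_fractIoiOne_le_one t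

lemma fractIoiOne_isBigO_nhdsGT_zero (b : ℝ) :
    fractIoiOne =O[nhdsWithin 0 (Ioi 0)] (fun t : ℝ ↦ t ^ (-b)) := by
  have h : fractIoiOne =ᶠ[nhdsWithin 0 (Ioi 0)] 0 := by
    filter_upwards [mem_nhdsWithin_of_mem_nhds (Iio_mem_nhds (zero_lt_one (α := ℝ)))] with t ht
    exact indicator_of_notMem (fun h ↦ lt_asymm h ht) _
  exact h.trans_isBigO (isBigO_zero _ _)

lemma mellinConvergent_fractIoiOne {s : ℂ} (hs : s.re < 0) : MellinConvergent fractIoiOne s :=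
  mellinConvergent_of_isBigO_rpow locallyIntegrableOn_fractIoiOne fractIoiOne_isBigO_atTop hs
    (fractIoiOne_isBigO_nhdsGT_zero _) (sub_one_lt s.re)

lemma differentiableAt_mellin_fractIoiOne {s : ℂ} (hs : s.re < 0) :
    DifferentiableAt ℂ (mellin fractIoiOne) s :=
  mellin_differentiableAt_of_isBigO_rpow locallyIntegrableOn_fractIoiOne
    fractIoiOne_isBigO_atTop hs (fractIoiOne_isBigO_nhdsGT_zero _) (sub_one_lt s.re)

lemma riemannZeta_eq_sub_mul_mellin_of_one_lt_re {s : ℂ} (hs : 1 < s.re) :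
    riemannZeta s = s / (s - 1) - s * mellin fractIoiOne (-s) := by
  have hs' : s - 1 ≠ 0 := sub_ne_zero.mpr fun h ↦ by simp [h] at hs
  have hconv : IntegrableOn (fun t : ℝ ↦ (t : ℂ) ^ (-s - 1) • fractIoiOne t) (Ioi 1) :=
    (mellinConvergent_fractIoiOne (s := -s) (by simp; linarith)).mono_set
      (Ioi_subset_Ioi zero_le_one)
  have hpow : IntegrableOn (fun t : ℝ ↦ (t : ℂ) ^ (-s)) (Ioi 1) :=
    integrableOn_Ioi_cpow_of_lt (by simpa using hs) zero_lt_one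
  have hmellin : mellin fractIoiOne (-s) =
      ∫ t in Ioi (1 : ℝ), (t : ℂ) ^ (-s - 1) • fractIoiOne t := by
    refine setIntegral_eq_of_subset_of_forall_sdiff_eq_zero measurableSet_Ioi
      (Ioi_subset_Ioi zero_le_one) fun t ht ↦ ?_
    rw [fractIoiOne, indicator_of_notMem ht.2, smul_zero]
  have hfloor : riemannZeta s =
      s * ∫ t in Ioi (1 : ℝ), (∑ k ∈ Finset.Icc 1 ⌊t⌋₊, (1 : ℂ)) * t ^ (-(s + 1)) := by
    rw [← LSeries_one_eq_riemannZeta hs]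
    refine LSeries_eq_mul_integral' 1 zero_le_one hs ?_
    exact IsBigO.of_bound 1 (Eventually.of_forall fun n ↦ by simp)
  have hsplit : (∫ t in Ioi (1 : ℝ), (∑ k ∈ Finset.Icc 1 ⌊t⌋₊, (1 : ℂ)) * t ^ (-(s + 1))) =
      ∫ t in Ioi (1 : ℝ), ((t : ℂ) ^ (-s) - (t : ℂ) ^ (-s - 1) • fractIoiOne t) := by
    refine setIntegral_congr_fun measurableSet_Ioi fun t ht ↦ ?_
    have ht0 : (0 : ℝ) < t := zero_lt_one.trans ht
    have ht0' : (t : ℂ) ≠ 0 := Complex.ofReal_ne_zero.mpr ht0.ne'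
    have hfl : ((⌊t⌋₊ : ℕ) : ℂ) = t - (Int.fract t : ℝ) := by
      rw [← Complex.ofReal_natCast, natCast_floor_eq_intCast_floor ht0.le, ← Complex.ofReal_sub,
        Int.self_sub_fract]
    have hp : (t : ℂ) ^ (-s) = t * (t : ℂ) ^ (-s - 1) := by
      rw [Complex.cpow_sub _ _ ht0', Complex.cpow_one]
      field_simp
    simp only [Finset.sum_const, Nat.card_Icc, add_tsub_cancel_right, nsmul_eq_mul, mul_one,
      fractIoiOne, indicator_of_mem ht, smul_eq_mul, hfl, hp, neg_add']
    ring
  rw [hfloor, hsplit, integral_sub hpow hconv, ← hmellin,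
    integral_Ioi_cpow_of_lt (by simpa using hs) zero_lt_one, Complex.ofReal_one, Complex.one_cpow,
    show -s + 1 = -(s - 1) by ring, neg_div_neg_eq]
  ring

lemma riemannZeta_eq_sub_mul_mellin {s : ℂ} (hs : 0 < s.re) (hs1 : s ≠ 1) :
    riemannZeta s = s / (s - 1) - s * mellin fractIoiOne (-s) := by
  have hopen : IsOpen {z : ℂ | 0 < z.re} := isOpen_lt continuous_const Complex.continuous_re
  have hR : AnalyticOnNhd ℂ (fun z ↦ z - (z - 1) * z * mellin fractIoiOne (-z))
      {z : ℂ | 0 < z.re} := by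
    refine DifferentiableOn.analyticOnNhd (fun z hz ↦ ?_) hopen
    have h : DifferentiableAt ℂ (fun z ↦ mellin fractIoiOne (-z)) z :=
      (differentiableAt_mellin_fractIoiOne (s := -z) (by simpa using hz)).comp z
        differentiableAt_id.neg
    exact DifferentiableAt.differentiableWithinAt (by fun_prop)
  have hL : AnalyticOnNhd ℂ riemannZeta₁ {z : ℂ | 0 < z.re} :=
    differentiable_riemannZeta₁.differentiableOn.analyticOnNhd hopen
  have heq : riemannZeta₁ =ᶠ[nhds 2] fun z ↦ z - (z - 1) * z * mellin fractIoiOne (-z) := by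
    filter_upwards [(isOpen_lt continuous_const Complex.continuous_re).mem_nhds
      (show (1 : ℝ) < (2 : ℂ).re by simp)] with z hz
    have hz1 : z ≠ 1 := fun h ↦ by simp [h] at hz
    have hz' : z - 1 ≠ 0 := sub_ne_zero.mpr hz1
    have h := riemannZeta_eq_sub_mul_mellin_of_one_lt_re hz
    rw [riemannZeta_eq_inv_sub_mul hz1] at h
    field_simp at h
    linear_combination h
  have h := hL.eqOn_of_preconnected_of_eventuallyEq hR
    (convex_halfSpace_re_gt 0).isPreconnected (by simp) heq hs
  have hs' : s - 1 ≠ 0 := sub_ne_zero.mpr hs1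
  rw [riemannZeta_eq_inv_sub_mul hs1, h]
  field_simp

/-- Single-term Beurling identity: for Re(s) > 0, s ≠ 1, and θ ∈ (0,1],
∫₀¹ ρ(θ/x) x^{s-1} dx = θ/(s-1) - ζ(s) θ^s / s. -/
theorem fract_mellin_single (θ : ℝ) (hθ0 : 0 < θ) (hθ1 : θ ≤ 1)
    (s : ℂ) (hs : 0 < s.re) (hs1 : s ≠ 1) :
    (∫ x in (0:ℝ)..1, ((Int.fract (θ / x) : ℝ) : ℂ) * (x : ℂ) ^ (s - 1))
      = (θ : ℂ) / (s - 1) - riemannZeta s * (θ : ℂ) ^ s / s := by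
  have hs0 : s ≠ 0 := fun h ↦ by simp [h] at hs
  have hs' : s - 1 ≠ 0 := sub_ne_zero.mpr hs1
  have hθ : (θ : ℂ) ≠ 0 := Complex.ofReal_ne_zero.mpr hθ0.ne'
  have hconv : MellinConvergent (fun x ↦ fractIoiOne (θ⁻¹ * x)⁻¹) s := by
    refine (MellinConvergent.comp_mul_left (f := fun x ↦ fractIoiOne x⁻¹)
      (inv_pos.mpr hθ0)).mpr ?_
    simpa only [Real.rpow_neg_one, Complex.ofReal_neg, Complex.ofReal_one, div_neg, div_one] using
      (MellinConvergent.comp_rpow (f := fractIoiOne) (s := s) (a := -1) (by norm_num)).mpr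
        (mellinConvergent_fractIoiOne (by simpa [div_neg] using hs))
  have hmellin : mellin (fun x ↦ fractIoiOne (θ⁻¹ * x)⁻¹) s =
      (θ : ℂ) ^ s * mellin fractIoiOne (-s) := by
    rw [mellin_comp_mul_left (fun x ↦ fractIoiOne x⁻¹) s (inv_pos.mpr hθ0), mellin_comp_inv,
      smul_eq_mul, Complex.ofReal_inv, Complex.inv_cpow _ _ (by
        rw [Complex.arg_ofReal_of_nonneg hθ0.le]; exact Real.pi_pos.ne), Complex.cpow_neg,
      inv_inv]
  have hleft : EqOn (fun x : ℝ ↦ (x : ℂ) ^ (s - 1) • fractIoiOne (θ⁻¹ * x)⁻¹)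
      (fun x : ℝ ↦ ((Int.fract (θ / x) : ℝ) : ℂ) * (x : ℂ) ^ (s - 1)) (Ioc 0 θ) := by
    intro x hx
    have hinv : (θ⁻¹ * x)⁻¹ = θ / x := by rw [mul_inv, inv_inv, div_eq_mul_inv]
    simp only [hinv, smul_eq_mul, fractIoiOne]
    rcases hx.2.eq_or_lt with rfl | hlt
    · simp [hx.1.ne']
    · rw [indicator_of_mem (show θ / x ∈ Ioi 1 from (one_lt_div hx.1).mpr hlt), mul_comm]
  have hright : EqOn (fun x : ℝ ↦ (θ : ℂ) * (x : ℂ) ^ (s - 2))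
      (fun x : ℝ ↦ ((Int.fract (θ / x) : ℝ) : ℂ) * (x : ℂ) ^ (s - 1)) (Ioc θ 1) := by
    intro x hx
    have hx0 : 0 < x := hθ0.trans hx.1
    have hx0' : (x : ℂ) ≠ 0 := Complex.ofReal_ne_zero.mpr hx0.ne'
    have hfr : Int.fract (θ / x) = θ / x :=
      Int.fract_eq_self.mpr ⟨by positivity, (div_lt_one hx0).mpr hx.1⟩
    simp only [hfr, Complex.ofReal_div]
    rw [show s - 1 = s - 2 + 1 by ring, Complex.cpow_add _ _ hx0', Complex.cpow_one]
    field_simp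
  have h0 : (0 : ℝ) ∉ uIcc θ 1 := by
    rw [uIcc_of_le hθ1]; exact fun h ↦ hθ0.not_ge h.1
  have hint_left : IntervalIntegrable
      (fun x : ℝ ↦ ((Int.fract (θ / x) : ℝ) : ℂ) * (x : ℂ) ^ (s - 1)) volume 0 θ :=
    (intervalIntegrable_iff_integrableOn_Ioc_of_le hθ0.le).mpr <|
      (hconv.mono_set Ioc_subset_Ioi_self).congr_fun hleft measurableSet_Ioc
  have hint_right : IntervalIntegrable
      (fun x : ℝ ↦ ((Int.fract (θ / x) : ℝ) : ℂ) * (x : ℂ) ^ (s - 1)) volume θ 1 := by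
    rw [intervalIntegrable_iff_integrableOn_Ioc_of_le hθ1]
    refine IntegrableOn.congr_fun ?_ hright measurableSet_Ioc
    exact (intervalIntegrable_iff_integrableOn_Ioc_of_le hθ1).mp
      ((intervalIntegral.intervalIntegrable_cpow (Or.inr h0)).const_mul _)
  have hval_left : (∫ x in (0 : ℝ)..θ, ((Int.fract (θ / x) : ℝ) : ℂ) * (x : ℂ) ^ (s - 1)) =
      (θ : ℂ) ^ s * mellin fractIoiOne (-s) := by
    rw [intervalIntegral.integral_of_le hθ0.le, ← hmellin,
      ← setIntegral_congr_fun measurableSet_Ioc hleft]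
    refine (setIntegral_eq_of_subset_of_forall_sdiff_eq_zero measurableSet_Ioi
      Ioc_subset_Ioi_self fun x hx ↦ ?_).symm
    have hlt : θ < x := not_le.mp fun h ↦ hx.2 ⟨hx.1, h⟩
    have hnot : (θ⁻¹ * x)⁻¹ ∉ Ioi (1 : ℝ) := by
      rw [mul_inv, inv_inv, ← div_eq_mul_inv, mem_Ioi, not_lt]
      exact (div_le_one hx.1).mpr hlt.le
    rw [fractIoiOne, indicator_of_notMem hnot, smul_zero]
  have hval_right : (∫ x in θ..1, ((Int.fract (θ / x) : ℝ) : ℂ) * (x : ℂ) ^ (s - 1)) =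
      (θ - (θ : ℂ) ^ s) / (s - 1) := by
    rw [intervalIntegral.integral_of_le hθ1, ← setIntegral_congr_fun measurableSet_Ioc hright,
      ← intervalIntegral.integral_of_le hθ1, intervalIntegral.integral_const_mul,
      integral_cpow (Or.inr ⟨fun h ↦ hs' (by linear_combination h), h0⟩),
      show s - 2 + 1 = s - 1 by ring, Complex.ofReal_one, Complex.one_cpow,
      Complex.cpow_sub _ _ hθ, Complex.cpow_one]
    field_simp
  rw [← intervalIntegral.integral_add_adjacent_intervals hint_left hint_right, hval_left,
    hval_right, riemannZeta_eq_sub_mul_mellin hs hs1]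
  field_simp
  ring
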